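/- arXiv:2312.15954 — 2 statements merged into one kernel-verified Lean document; each statement's English description precedes it below -/
import Mathlib

section
/- Let p be a prime, n ≥ 1, R = ZMod (p^n), and let d0 be a fixed zero divisor of R. Suppose the pair (v1, v2) of vectors in ι → R satisfies the column conditions (C1), (C2), (C3), (C5), satisfies (C4) for every zero divisor d ≠ d0, but contains no unit multiple of the column (1, d0), i.e. there is no index i and unit w of R with v1 i = w and v2 i = w * d0. Then the code M generated by v1 and v2 is not minimal: there exist codewords w, w' ∈ M with w' ≠ 0, supp(w') ⊆ supp(w), and w' ≠ a • w for every a ∈ R. -/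
/-!
The codeword `w = d0 • v1 - v2` vanishes at a column `(x, y)` exactly when `y = d0 * x`. No such
column has `x` a unit, so `p ∣ x` at every zero of `w`, and `w' = p ^ (n - 1) • v1` vanishes
there too (`pow_pred_mul_of_not_isUnit`). The column `(1, 0)` gives `w' ≠ 0`, while the column
`(0, 1)` shows that `w' = a • w` would force `a = 0`.
-/

lemma pow_pred_mul_of_not_isUnit {p n : ℕ} (hp : p.Prime) (hn : 1 ≤ n) {x : ZMod (p ^ n)}
    (hx : ¬ IsUnit x) : (p : ZMod (p ^ n)) ^ (n - 1) * x = 0 := by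
  haveI : NeZero (p ^ n) := ⟨pow_ne_zero n hp.ne_zero⟩
  obtain ⟨m, rfl⟩ : ∃ m : ℕ, (m : ZMod (p ^ n)) = x := ⟨x.val, ZMod.natCast_zmod_val x⟩
  have hdvd : p ∣ m := by
    by_contra h
    exact hx ((ZMod.isUnit_iff_coprime m (p ^ n)).2
      (((Nat.Prime.coprime_iff_not_dvd hp).2 h).symm.pow_right n))
  obtain ⟨k, rfl⟩ := hdvd
  have hpn : (p : ZMod (p ^ n)) ^ n = 0 := by
    exact_mod_cast ZMod.natCast_self (p ^ n)
  rw [Nat.cast_mul, ← mul_assoc, ← pow_succ, Nat.sub_add_cancel hn, hpn, zero_mul]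

lemma pow_pred_ne_zero {p n : ℕ} (hp : p.Prime) (hn : 1 ≤ n) :
    (p : ZMod (p ^ n)) ^ (n - 1) ≠ 0 := by
  intro h
  have h' : ((p ^ (n - 1) : ℕ) : ZMod (p ^ n)) = 0 := by exact_mod_cast h
  rw [ZMod.natCast_eq_zero_iff, Nat.pow_dvd_pow_iff_le_right hp.one_lt] at h'
  omega

/-- If (C1), (C2), (C3), (C5) hold, (C4) holds for every zero divisor
`d ≠ d0`, but no unit multiple of the column `(1, d0)` is present, then the code
generated by `v1, v2` is not minimal. -/
theorem not_minimal_without_D_column {ι : Type*} [Fintype ι] (p n : ℕ)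
    (hp : p.Prime) (hn : 1 ≤ n)
    (d0 : ZMod (p ^ n)) (hd0 : d0 ≠ 0 ∧ ¬ IsUnit d0)
    (v1 v2 : ι → ZMod (p ^ n))
    (hC1 : ∃ i, v1 i = 1 ∧ v2 i = 0)
    (hC2 : ∃ i, v1 i = 0 ∧ v2 i = 1)
    (hC3 : ∀ u : ZMod (p ^ n), IsUnit u → ∃ i, v1 i = 1 ∧ v2 i = u)
    (hC4 : ∀ d : ZMod (p ^ n), d ≠ 0 → ¬ IsUnit d → d ≠ d0 → ∃ i, v1 i = 1 ∧ v2 i = d)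
    (hC5 : ∀ d : ZMod (p ^ n), d ≠ 0 → ¬ IsUnit d → ∃ i, v1 i = d ∧ v2 i = 1)
    (hno : ¬ ∃ i, ∃ w : ZMod (p ^ n), IsUnit w ∧ v1 i = w ∧ v2 i = w * d0) :
    ∃ c1 c2 c1' c2' : ZMod (p ^ n),
      c1' • v1 + c2' • v2 ≠ 0 ∧
      {i | (c1' • v1 + c2' • v2) i ≠ 0} ⊆ {i | (c1 • v1 + c2 • v2) i ≠ 0} ∧
      ∀ a : ZMod (p ^ n), c1' • v1 + c2' • v2 ≠ a • (c1 • v1 + c2 • v2) := by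
  obtain ⟨i, hi1, hi2⟩ := hC1
  obtain ⟨j, hj1, hj2⟩ := hC2
  have hne := pow_pred_ne_zero hp hn
  refine ⟨d0, -1, (p : ZMod (p ^ n)) ^ (n - 1), 0, ?_, ?_, ?_⟩
  · intro h
    apply hne
    simpa [hi1] using congrFun h i
  · intro k hk hk0
    apply hk
    have hy : v2 k = v1 k * d0 := by
      simp only [Pi.add_apply, Pi.smul_apply, smul_eq_mul] at hk0
      linear_combination -hk0
    have hx : ¬ IsUnit (v1 k) := fun hu => hno ⟨k, v1 k, hu, rfl, hy⟩
    simpa using pow_pred_mul_of_not_isUnit hp hn hx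
  · intro a h
    have ha : a = 0 := by
      simpa [hj1, hj2] using congrFun h j
    apply hne
    simpa [hi1, ha] using congrFun h i
end

section
/- Let p be a prime, n ≥ 1, and R = ZMod (p^n). Suppose the pair (v1, v2) of vectors in ι → R contains the standard columns (C1)–(C5). Then for every zero divisor d of R and every k5 ∈ R, the codeword k5 • (d • v1 + v2) is minimal in the code M generated by v1 and v2: every nonzero codeword w' ∈ M with supp(w') ⊆ supp(k5 • (d • v1 + v2)) satisfies w' = a • (k5 • (d • v1 + v2)) for some a ∈ R. -/
/-!
Conditions (C1), (C3), (C4) together say that every column `(1, y)` occurs. At such a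
column the two codewords have entries `k * (d + y)` and `c₁ + c₂ * y`, so the inclusion of supports
gives: `k * (d + y) = 0` implies `c₁ + c₂ * y = 0`, for all `y`. Taking `y = -d` gives
`c₁ = c₂ * d`, so the codeword is `c₂ • (d • v1 + v2)`; taking `y = z - d` then shows that the
annihilator of `k` is contained in that of `c₂`. In `ZMod N` this forces `k ∣ c₂`
(`ZMod.dvd_of_annihilator_le`), which supplies the scalar.
-/

/-- Double annihilators of principal ideals of `ZMod N` are trivial: if `Ann k ⊆ Ann c`, then
`k ∣ c`. The element `N / gcd (k, N)` of `Ann k` already forces `gcd (k, N) ∣ c`. -/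
theorem ZMod.dvd_of_annihilator_le {N : ℕ} [NeZero N] (k c : ZMod N)
    (h : ∀ z : ZMod N, k * z = 0 → c * z = 0) : k ∣ c := by
  obtain ⟨K, rfl⟩ := ZMod.natCast_zmod_surjective k
  obtain ⟨C, rfl⟩ := ZMod.natCast_zmod_surjective c
  have hN : 0 < N := Nat.pos_of_ne_zero (NeZero.ne N)
  obtain ⟨m, hm⟩ := Nat.gcd_dvd_right K N
  obtain ⟨l, hl⟩ := Nat.gcd_dvd_left K N
  have hm0 : 0 < m := Nat.pos_of_ne_zero (by rintro rfl; omega)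
  have h1 : ((C * m : ℕ) : ZMod N) = 0 := by
    rw [Nat.cast_mul]
    apply h
    rw [← Nat.cast_mul, ZMod.natCast_eq_zero_iff]
    exact ⟨l, by nth_rewrite 1 [hl]; nth_rewrite 2 [hm]; ring⟩
  rw [ZMod.natCast_eq_zero_iff] at h1
  have h2 : K.gcd N ∣ C := by
    refine Nat.dvd_of_mul_dvd_mul_right hm0 ?_
    rwa [← hm]
  obtain ⟨t, ht⟩ := h2
  have hb : ((K.gcd N : ℕ) : ZMod N) = K * ((K.gcdA N : ℤ) : ZMod N) := by
    have := congrArg (Int.cast : ℤ → ZMod N) (Nat.gcd_eq_gcd_ab K N)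
    simpa using this
  exact ⟨((K.gcdA N : ℤ) : ZMod N) * t, by rw [ht, Nat.cast_mul, hb]; ring⟩

/-- With the standard columns (C1)–(C5), for every zero divisor `d`, every
codeword of the form `k5 • (d • v1 + v2)` is minimal in the code generated by `v1, v2`. -/
theorem type5_vectors_minimal {ι : Type*} [Fintype ι] (p n : ℕ) (hp : p.Prime) (hn : 1 ≤ n)
    (v1 v2 : ι → ZMod (p ^ n))
    (hC1 : ∃ i, v1 i = 1 ∧ v2 i = 0)
    (hC2 : ∃ i, v1 i = 0 ∧ v2 i = 1)
    (hC3 : ∀ u : ZMod (p ^ n), IsUnit u → ∃ i, v1 i = 1 ∧ v2 i = u)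
    (hC4 : ∀ d : ZMod (p ^ n), d ≠ 0 → ¬ IsUnit d → ∃ i, v1 i = 1 ∧ v2 i = d)
    (hC5 : ∀ d : ZMod (p ^ n), d ≠ 0 → ¬ IsUnit d → ∃ i, v1 i = d ∧ v2 i = 1) :
    ∀ d : ZMod (p ^ n), d ≠ 0 → ¬ IsUnit d → ∀ k5 : ZMod (p ^ n), ∀ c1' c2' : ZMod (p ^ n),
      c1' • v1 + c2' • v2 ≠ 0 →
      {i | (c1' • v1 + c2' • v2) i ≠ 0} ⊆ {i | (k5 • (d • v1 + v2)) i ≠ 0} →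
      ∃ a : ZMod (p ^ n), c1' • v1 + c2' • v2 = a • (k5 • (d • v1 + v2)) := by
  intro d _ _ k c1 c2 _ hsub
  have : NeZero (p ^ n) := ⟨pow_ne_zero _ hp.ne_zero⟩
  have hcol : ∀ y : ZMod (p ^ n), ∃ i, v1 i = 1 ∧ v2 i = y := by
    intro y
    by_cases hu : IsUnit y
    · exact hC3 y hu
    by_cases h0 : y = 0
    · rw [h0]
      exact hC1
    · exact hC4 y h0 hu
  have key : ∀ y : ZMod (p ^ n), k * (d + y) = 0 → c1 + c2 * y = 0 := by
    intro y hy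
    obtain ⟨i, h1, h2⟩ := hcol y
    by_contra hne
    have hi : i ∈ {i | (c1 • v1 + c2 • v2) i ≠ 0} := by simpa [h1, h2] using hne
    have hi' : k * (d * v1 i + v2 i) ≠ 0 := by simpa using hsub hi
    exact hi' (by rw [h1, h2, mul_one]; exact hy)
  have hc1 : c1 = c2 * d := by
    linear_combination key (-d) (by ring)
  obtain ⟨a, ha⟩ := ZMod.dvd_of_annihilator_le k c2 fun z hz => by
    linear_combination key (z - d) (by linear_combination hz) - hc1
  refine ⟨a, funext fun i => ?_⟩
  simp only [Pi.add_apply, Pi.smul_apply, smul_eq_mul]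
  rw [hc1, ha]
  ring
end
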